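/- Let B be a symplectic form on a 2J-dimensional vector space V over F_2 with J ≥ 2, and let D ⊆ V be an affine quadric with #D = 2^{J−1}(2^J+1). Then every Lagrangian subspace of V has exactly one coset contained in D; hence the number of affine Lagrangian subspaces of V contained in D equals the number ∏_{j=1}^{J}(2^j+1) of Lagrangian subspaces of V. Moreover, every pair of distinct points of D is contained in exactly ∏_{j=0}^{J−2}(2^j+1) affine Lagrangian subspaces contained in D; i.e., the affine Lagrangian subspaces contained in D form a BIBD on the point set D with parameters V_D = 2^{J−1}(2^J+1), K_D = 2^J, Λ_D = ∏_{j=0}^{J−2}(2^j+1). -/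

import Mathlib

open scoped BigOperators

noncomputable section

/-- A bilinear form is symplectic: alternating and nondegenerate. -/
def IsSymplectic {F V : Type*} [CommRing F] [AddCommGroup V] [Module F V]
    (B : V →ₗ[F] V →ₗ[F] F) : Prop :=
  (∀ v, B v v = 0) ∧ ∀ v : V, v ≠ 0 → ∃ w, B v w ≠ 0

/-- The orthogonal complement of a subset with respect to a bilinear form. -/
def sympPerp {F V : Type*} [CommRing F] [AddCommGroup V] [Module F V]
    (B : V →ₗ[F] V →ₗ[F] F) (S : Set V) : Set V :=
  {w | ∀ v ∈ S, B v w = 0}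

/-- A subspace is Lagrangian if it equals its own orthogonal complement. -/
def IsLagrangian {F V : Type*} [CommRing F] [AddCommGroup V] [Module F V]
    (B : V →ₗ[F] V →ₗ[F] F) (L : Submodule F V) : Prop :=
  (L : Set V) = sympPerp B (L : Set V)

/-- The affine Lagrangian subspaces: cosets `v + L` of Lagrangian subspaces. -/
def affineLagrangians {F V : Type*} [CommRing F] [AddCommGroup V] [Module F V]
    (B : V →ₗ[F] V →ₗ[F] F) : Set (Set V) :=
  {A | ∃ (v : V) (L : Submodule F V), IsLagrangian B L ∧
        A = (fun x => v + x) '' (L : Set V)}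

/-- `Q` is a quadratic form yielding the bilinear form `B` over `F₂`. -/
def YieldsForm {V : Type*} [AddCommGroup V] [Module (ZMod 2) V]
    (B : V →ₗ[ZMod 2] V →ₗ[ZMod 2] ZMod 2) (Q : V → ZMod 2) : Prop :=
  ∀ v₁ v₂ : V, Q (v₁ + v₂) + Q v₁ + Q v₂ = B v₁ v₂

/-- The quadric of a quadratic form: its set of zeros. -/
def quadric {V : Type*} (Q : V → ZMod 2) : Set V := {v | Q v = 0}

/-- A subset is an affine quadric if it or its complement is the quadric of
some quadratic form yielding `B`. -/
def IsAffineQuadric {V : Type*} [AddCommGroup V] [Module (ZMod 2) V]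
    (B : V →ₗ[ZMod 2] V →ₗ[ZMod 2] ZMod 2) (D : Set V) : Prop :=
  ∃ Q : V → ZMod 2, YieldsForm B Q ∧ (D = quadric Q ∨ D = (quadric Q)ᶜ)

/-!
Seen from any of its points, `D` is the zero set of a quadratic form `Q` yielding `B`, and the size
of `D` says exactly that `∑ v, (-1) ^ Q v = 2 ^ J`. Averaging over a subspace `W` on which `Q`
vanishes shows that this sum is concentrated on `W^⊥`.

* On a Lagrangian `L` the form `Q` is linear, so it is `B a` for some `a`, and `Q` is constant on
  the coset `a + L` and on no other. Since `Q + B a` vanishes on `L = L^⊥`, its exponential sum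
  `(-1) ^ Q a * 2 ^ J` equals `#L`, whence `Q a = 0` and `a + L` lies in the quadric.
* The concentration of the sum determines the number of zeros of `Q` in `W^⊥ \ W`, that is, the
  number of vectors by which `W` can be extended. Double counting the pairs `(L, v)` with
  `v ∈ L \ W` then gives, by induction on the codimension of `W` in `L`, the number of Lagrangians
  between `W` and the quadric. With the whole space in place of the quadric, the same recursion
  counts all Lagrangians.
-/

section Cosets

variable {K V : Type*} [CommRing K] [AddCommGroup V] [Module K V] {L M : Submodule K V}
  {v w x : V}

theorem mem_image_add_left_iff : x ∈ (v + ·) '' (L : Set V) ↔ x - v ∈ L := by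
  simp [Set.image_add_left, neg_add_eq_sub]

theorem image_add_left_eq_of_sub_mem (h : w - v ∈ L) :
    (v + ·) '' (L : Set V) = (w + ·) '' (L : Set V) := by
  ext x
  rw [mem_image_add_left_iff, mem_image_add_left_iff, ← L.sub_mem_iff_left h,
    sub_sub_sub_cancel_right]

theorem image_add_left_injective (v : V) :
    Function.Injective fun L : Submodule K V ↦ (v + ·) '' (L : Set V) :=
  (Set.image_injective.2 (add_right_injective v)).comp SetLike.coe_injective

theorem eq_of_image_add_left_eq (h : (v + ·) '' (L : Set V) = (w + ·) '' (M : Set V)) :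
    L = M := by
  have hv : v ∈ (w + ·) '' (M : Set V) := h ▸ mem_image_add_left_iff.2 (by simp)
  rw [image_add_left_eq_of_sub_mem (mem_image_add_left_iff.1 hv)] at h
  exact image_add_left_injective v h

end Cosets

section Lagrangian

variable {K V : Type*} [CommRing K] [AddCommGroup V] [Module K V] {B : LinearMap.BilinForm K V}
  {L W : Submodule K V} {S : Set V} {v : V}

theorem isLagrangian_iff_eq_orthogonal : IsLagrangian B L ↔ L = B.orthogonal L :=
  SetLike.coe_set_eq (q := B.orthogonal L)

theorem IsSymplectic.isAlt (hB : IsSymplectic B) : B.IsAlt := hB.1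

theorem IsSymplectic.nondegenerate (hB : IsSymplectic B) : B.Nondegenerate :=
  hB.isAlt.isRefl.nondegenerate_iff_separatingLeft.2 fun v hv ↦
    by_contra fun h ↦ (hB.2 v h).elim fun w hw ↦ hw (hv w)

theorem sup_span_singleton_le_orthogonal (hB : B.IsAlt) (hW : W ≤ B.orthogonal W)
    (hv : v ∈ B.orthogonal W) :
    W ⊔ Submodule.span K {v} ≤ B.orthogonal (W ⊔ Submodule.span K {v}) := by
  intro x hx y hy
  obtain ⟨w, hw, _, ha, rfl⟩ := Submodule.mem_sup.1 hx
  obtain ⟨w', hw', _, hb, rfl⟩ := Submodule.mem_sup.1 hy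
  obtain ⟨a, rfl⟩ := Submodule.mem_span_singleton.1 ha
  obtain ⟨b, rfl⟩ := Submodule.mem_span_singleton.1 hb
  have hw'w : B w' w = 0 := hW hw w' hw'
  have hw'v : B w' v = 0 := hv w' hw'
  have hvw : B v w = 0 := hB.isRefl _ _ (hv w hw)
  simp [hw'w, hw'v, hvw, hB.self_eq_zero v]

/-- The Lagrangian subspaces `L` with `W ⊆ L ⊆ S`, where `W` is a subspace and `S` any set. -/
def lagrangiansBetween (B : LinearMap.BilinForm K V) (W : Submodule K V) (S : Set V) :
    Set (Submodule K V) :=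
  {L | IsLagrangian B L ∧ W ≤ L ∧ (L : Set V) ⊆ S}

/-- A set is orthogonally closed if it contains all combinations `v + a • w` of its orthogonal
pairs of elements. The examples are the whole space and the zero sets of quadratic forms. -/
def IsOrthogonallyClosed (B : LinearMap.BilinForm K V) (S : Set V) : Prop :=
  ∀ v ∈ S, ∀ w ∈ S, B v w = 0 → ∀ a : K, v + a • w ∈ S

theorem IsOrthogonallyClosed.sup_span_singleton_subset (hS : IsOrthogonallyClosed B S)
    (hW : (W : Set V) ⊆ S) (hv : v ∈ B.orthogonal W) (hvS : v ∈ S) :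
    ((W ⊔ Submodule.span K {v} : Submodule K V) : Set V) ⊆ S := by
  intro x hx
  obtain ⟨w, hw, _, ha, rfl⟩ := Submodule.mem_sup.1 hx
  obtain ⟨a, rfl⟩ := Submodule.mem_span_singleton.1 ha
  exact hS w (hW hw) v hvS (hv w hw) a

theorem inter_sdiff_inter_eq_of_mem_lagrangiansBetween (hL : L ∈ lagrangiansBetween B W S) :
    ((B.orthogonal W : Set V) ∩ S) \ W ∩ L = (L : Set V) \ W := by
  obtain ⟨hlag, hWL, hLS⟩ := hL
  have hLW : L ≤ B.orthogonal W :=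
    (isLagrangian_iff_eq_orthogonal.1 hlag).le.trans (LinearMap.BilinForm.orthogonal_le hWL)
  ext x
  exact ⟨fun h ↦ ⟨h.2, h.1.2⟩, fun h ↦ ⟨⟨⟨hLW h.1, hLS h.1⟩, h.2⟩, h.1⟩⟩

theorem setOf_mem_lagrangiansBetween_and_mem :
    {L ∈ lagrangiansBetween B W S | v ∈ L} =
      lagrangiansBetween B (W ⊔ Submodule.span K {v}) S := by
  ext L
  simp only [lagrangiansBetween, Set.mem_ofPred_eq, sup_le_iff,
    Submodule.span_singleton_le_iff_mem]
  tauto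

theorem ncard_affineLagrangians_subset {D : Set V}
    (h : ∀ L : Submodule K V, IsLagrangian B L →
      ∃! C : Set V, (∃ v : V, C = (fun x ↦ v + x) '' (L : Set V)) ∧ C ⊆ D) :
    {A ∈ affineLagrangians B | A ⊆ D}.ncard =
      {L : Submodule K V | IsLagrangian B L}.ncard := by
  choose! C hC hunique using h
  have himage : {A ∈ affineLagrangians B | A ⊆ D} =
      C '' {L : Submodule K V | IsLagrangian B L} := by
    ext A
    constructor
    · rintro ⟨⟨v, L, hL, hA⟩, hAD⟩
      exact ⟨L, hL, (hunique L hL A ⟨⟨v, hA⟩, hAD⟩).symm⟩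
    · rintro ⟨L, hL, rfl⟩
      obtain ⟨⟨v, hv⟩, hD⟩ := hC L hL
      exact ⟨⟨v, L, hL, hv⟩, hD⟩
  rw [himage]
  refine Set.InjOn.ncard_image fun L hL M hM hLM ↦ ?_
  obtain ⟨v, hv⟩ := (hC L hL).1
  obtain ⟨w, hw⟩ := (hC M hM).1
  exact eq_of_image_add_left_eq (hv.symm.trans (hLM.trans hw))

theorem affineLagrangians_through_pair_eq_image (B : LinearMap.BilinForm K V) (D : Set V)
    (x y : V) :
    {A ∈ affineLagrangians B | A ⊆ D ∧ x ∈ A ∧ y ∈ A} =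
      (fun L : Submodule K V ↦ (x + ·) '' (L : Set V)) ''
        lagrangiansBetween B (Submodule.span K {y - x}) ((x + ·) ⁻¹' D) := by
  ext A
  constructor
  · rintro ⟨⟨v, L, hL, rfl⟩, hD, hx, hy⟩
    have hcoset := image_add_left_eq_of_sub_mem (mem_image_add_left_iff.1 hx)
    rw [hcoset] at hD hy
    exact ⟨L, ⟨hL, (L.span_singleton_le_iff_mem _).2 (mem_image_add_left_iff.1 hy),
      Set.image_subset_iff.1 hD⟩, hcoset.symm⟩
  · rintro ⟨L, ⟨hL, hxy, hD⟩, rfl⟩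
    exact ⟨⟨x, L, hL, rfl⟩, Set.image_subset_iff.2 hD, mem_image_add_left_iff.2 (by simp),
      mem_image_add_left_iff.2 ((L.span_singleton_le_iff_mem _).1 hxy)⟩

theorem ncard_affineLagrangians_through_pair (B : LinearMap.BilinForm K V) (D : Set V)
    (x y : V) :
    {A ∈ affineLagrangians B | A ⊆ D ∧ x ∈ A ∧ y ∈ A}.ncard =
      (lagrangiansBetween B (Submodule.span K {y - x}) ((x + ·) ⁻¹' D)).ncard := by
  rw [affineLagrangians_through_pair_eq_image,
    Set.ncard_image_of_injective _ (image_add_left_injective x)]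

end Lagrangian

section Counting

variable {K V : Type*} [Field K] [AddCommGroup V] [Module K V] [FiniteDimensional K V]
  {B : LinearMap.BilinForm K V} {L W : Submodule K V} {S : Set V} {J : ℕ}

theorem ncard_submodule (W : Submodule K V) :
    (W : Set V).ncard = Nat.card K ^ Module.finrank K W :=
  Module.natCard_eq_pow_finrank (V := W)

theorem isLagrangian_iff_finrank_eq (hB : B.Nondegenerate) (hdim : Module.finrank K V = 2 * J)
    (hW : W ≤ B.orthogonal W) : IsLagrangian B W ↔ Module.finrank K W = J := by
  have hperp := LinearMap.BilinForm.finrank_orthogonal hB W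
  have hle := W.finrank_le
  rw [isLagrangian_iff_eq_orthogonal]
  constructor
  · intro h
    rw [← h] at hperp
    lia
  · intro h
    exact Submodule.eq_of_le_of_finrank_eq hW (by lia)

theorem IsLagrangian.finrank_eq (hL : IsLagrangian B L) (hB : B.Nondegenerate)
    (hdim : Module.finrank K V = 2 * J) : Module.finrank K L = J :=
  (isLagrangian_iff_finrank_eq hB hdim (isLagrangian_iff_eq_orthogonal.1 hL).le).1 hL

theorem ncard_of_mem_affineLagrangians (hB : B.Nondegenerate)
    (hdim : Module.finrank K V = 2 * J) {A : Set V} (hA : A ∈ affineLagrangians B) :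
    A.ncard = Nat.card K ^ J := by
  obtain ⟨v, L, hL, rfl⟩ := hA
  rw [Set.ncard_image_of_injective _ (add_right_injective v), ncard_submodule,
    hL.finrank_eq hB hdim]

theorem lagrangiansBetween_eq_singleton (hB : B.Nondegenerate)
    (hdim : Module.finrank K V = 2 * J) (hW : W ≤ B.orthogonal W) (hWS : (W : Set V) ⊆ S)
    (hWJ : Module.finrank K W = J) : lagrangiansBetween B W S = {W} := by
  ext L
  rw [Set.mem_singleton_iff]
  constructor
  · rintro ⟨hL, hWL, -⟩
    exact (Submodule.eq_of_le_of_finrank_eq hWL (hWJ.trans (hL.finrank_eq hB hdim).symm)).symm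
  · rintro rfl
    exact ⟨(isLagrangian_iff_finrank_eq hB hdim hW).2 hWJ, le_rfl, hWS⟩

variable [Finite K]

-- Both sides count the pairs `(L, v)` with `v ∈ L \ W`.
theorem ncard_lagrangiansBetween_mul (hB : B.Nondegenerate)
    (hdim : Module.finrank K V = 2 * J) {N : ℕ}
    (hN : ∀ v ∈ ((B.orthogonal W : Set V) ∩ S) \ W,
      (lagrangiansBetween B (W ⊔ Submodule.span K {v}) S).ncard = N) :
    (lagrangiansBetween B W S).ncard * (Nat.card K ^ J - Nat.card K ^ Module.finrank K W) =
      (((B.orthogonal W : Set V) ∩ S) \ W).ncard * N := by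
  classical
  have : Finite V := Module.finite_of_finite K
  have := Fintype.ofFinite V
  have := Fintype.ofFinite (Submodule K V)
  rw [Set.ncard_eq_toFinset_card', Set.ncard_eq_toFinset_card' (_ \ _)]
  refine Finset.card_mul_eq_card_mul (fun L v ↦ v ∈ L) (fun L hL ↦ ?_) fun v hv ↦ ?_
  · rw [Set.mem_toFinset] at hL
    rw [← hL.1.finrank_eq hB hdim, ← ncard_submodule, ← ncard_submodule,
      ← Set.ncard_sdiff hL.2.1, ← inter_sdiff_inter_eq_of_mem_lagrangiansBetween hL,
      ← Set.ncard_coe_finset]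
    simp [Finset.bipartiteAbove, Set.inter_def]
  · rw [← hN v (Set.mem_toFinset.1 hv), ← setOf_mem_lagrangiansBetween_and_mem,
      ← Set.ncard_coe_finset]
    simp [Finset.bipartiteBelow]

theorem ncard_lagrangiansBetween_eq_prod (hB : IsSymplectic B)
    (hdim : Module.finrank K V = 2 * J) (hS : IsOrthogonallyClosed B S) (g : ℕ → ℕ)
    (hcount : ∀ (W : Submodule K V) (m : ℕ), W ≤ B.orthogonal W → (W : Set V) ⊆ S →
      Module.finrank K W + (m + 1) = J → (((B.orthogonal W : Set V) ∩ S) \ W).ncard =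
        (Nat.card K ^ J - Nat.card K ^ Module.finrank K W) * g m)
    (m : ℕ) (hW : W ≤ B.orthogonal W) (hWS : (W : Set V) ⊆ S)
    (hWm : Module.finrank K W + m = J) :
    (lagrangiansBetween B W S).ncard = ∏ i ∈ Finset.range m, g i := by
  induction m generalizing W with
  | zero =>
    rw [lagrangiansBetween_eq_singleton hB.nondegenerate hdim hW hWS hWm, Set.ncard_singleton,
      Finset.prod_range_zero]
  | succ m ih =>
    have hext : ∀ v ∈ ((B.orthogonal W : Set V) ∩ S) \ W,
        (lagrangiansBetween B (W ⊔ Submodule.span K {v}) S).ncard =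
          ∏ i ∈ Finset.range m, g i := by
      rintro v ⟨⟨hv, hvS⟩, hvW⟩
      refine ih (sup_span_singleton_le_orthogonal hB.isAlt hW hv)
        (hS.sup_span_singleton_subset hWS hv hvS) ?_
      rw [Submodule.finrank_sup_span_singleton hvW]
      lia
    have hpos : 0 < Nat.card K ^ J - Nat.card K ^ Module.finrank K W :=
      Nat.sub_pos_of_lt (Nat.pow_lt_pow_right Finite.one_lt_card (by lia))
    refine Nat.eq_of_mul_eq_mul_right hpos ?_
    rw [ncard_lagrangiansBetween_mul hB.nondegenerate hdim hext, hcount W m hW hWS hWm,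
      Finset.prod_range_succ]
    ring

theorem ncard_orthogonal_sdiff (hB : B.Nondegenerate) (hdim : Module.finrank K V = 2 * J)
    (hW : W ≤ B.orthogonal W) {m : ℕ} (hWm : Module.finrank K W + m = J) :
    ((B.orthogonal W : Set V) \ W).ncard =
      (Nat.card K ^ J - Nat.card K ^ Module.finrank K W) * (Nat.card K ^ m + 1) := by
  have : Finite V := Module.finite_of_finite K
  have hperp : Module.finrank K (B.orthogonal W) = Module.finrank K W + m + m := by
    rw [LinearMap.BilinForm.finrank_orthogonal hB, hdim]
    lia
  rw [Set.ncard_sdiff hW, ncard_submodule, ncard_submodule, hperp, ← hWm, pow_add, pow_add,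
    Nat.sub_mul, mul_add_one, mul_add_one,
    add_comm _ (Nat.card K ^ Module.finrank K W), Nat.add_sub_add_right]

theorem ncard_setOf_isLagrangian (hB : IsSymplectic B) (hdim : Module.finrank K V = 2 * J) :
    {L : Submodule K V | IsLagrangian B L}.ncard =
      ∏ j ∈ Finset.Icc 1 J, (Nat.card K ^ j + 1) := by
  have h := ncard_lagrangiansBetween_eq_prod (W := ⊥) (S := Set.univ) hB hdim
    (fun _ _ _ _ _ _ ↦ Set.mem_univ _) (fun m ↦ Nat.card K ^ (m + 1) + 1)
    (fun W m hW _ hWm ↦ by rw [Set.inter_univ, ncard_orthogonal_sdiff hB.nondegenerate hdim hW hWm])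
    J bot_le (Set.subset_univ _) (by simp)
  rw [← Finset.Ico_add_one_right_eq_Icc, ← Finset.prod_Ico_add' _ 0 J 1, ← Finset.range_eq_Ico,
    ← h]
  simp [lagrangiansBetween]

end Counting

section SignSum

/-- The nontrivial character `a ↦ (-1) ^ a` of `𝔽₂`. -/
def signChar : AddChar (ZMod 2) ℤ := AddChar.zmodChar 2 (ζ := -1) (by norm_num)

theorem signChar_eq_ite (a : ZMod 2) : signChar a = if a = 0 then 1 else -1 := by
  revert a; decide

/-- The exponential sum `∑ i, (-1) ^ f i`, that is, the number of zeros of `f` minus the number of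
its nonzeros. -/
def signSum {ι : Type*} [Fintype ι] (f : ι → ZMod 2) : ℤ := ∑ i, signChar (f i)

theorem two_mul_ncard_quadric {ι : Type*} [Fintype ι] (f : ι → ZMod 2) :
    2 * ((quadric f).ncard : ℤ) = Nat.card ι + signSum f := by
  have hzeros : ((quadric f).ncard : ℤ) = ∑ i, if f i = 0 then 1 else 0 := by
    rw [Finset.sum_boole, ← Set.ncard_coe_finset]
    simp [quadric]
  rw [hzeros, Nat.card_eq_fintype_card, ← Finset.card_univ, Finset.cast_card, signSum,
    ← Finset.sum_add_distrib, Finset.mul_sum]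
  refine Finset.sum_congr rfl fun i _ ↦ ?_
  rw [signChar_eq_ite]
  split_ifs <;> rfl

end SignSum

section QuadraticForm

variable {V : Type*} [AddCommGroup V] [Module (ZMod 2) V]
  {B : LinearMap.BilinForm (ZMod 2) V} {Q : V → ZMod 2} {W L : Submodule (ZMod 2) V} {D : Set V}

theorem YieldsForm.map_add (hQ : YieldsForm B Q) (v w : V) :
    Q (v + w) = Q v + Q w + B v w := by
  rw [← hQ v w]
  generalize Q (v + w) = a, Q v = b, Q w = c
  revert a b c
  decide

theorem YieldsForm.map_zero (hQ : YieldsForm B Q) : Q 0 = 0 := by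
  simpa using hQ.map_add 0 0

theorem YieldsForm.add_linearMap (hQ : YieldsForm B Q) (f : V →ₗ[ZMod 2] ZMod 2) :
    YieldsForm B fun v ↦ Q v + f v := by
  intro v w
  simp only [hQ.map_add, f.map_add]
  generalize Q v = a, Q w = b, f v = c, f w = d, B v w = e
  revert a b c d e
  decide

theorem YieldsForm.isOrthogonallyClosed_quadric (hQ : YieldsForm B Q) :
    IsOrthogonallyClosed B (quadric Q) := by
  intro v (hv : Q v = 0) w (hw : Q w = 0) hvw a
  change Q (v + a • w) = 0
  obtain rfl | rfl : a = 0 ∨ a = 1 := by revert a; decide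
  · simpa using hv
  · simp [hQ.map_add, hv, hw, hvw]

theorem IsAffineQuadric.exists_preimage_add_left_eq_quadric (hD : IsAffineQuadric B D) {x : V}
    (hx : x ∈ D) : ∃ Q, YieldsForm B Q ∧ (x + ·) ⁻¹' D = quadric Q := by
  obtain ⟨Q, hQ, hDQ⟩ := hD
  obtain ⟨c, rfl⟩ : ∃ c, D = {v | Q v = c} := by
    obtain rfl | rfl := hDQ
    · exact ⟨0, rfl⟩
    · exact ⟨1, Set.ext fun v ↦ (by decide : ∀ a : ZMod 2, a ≠ 0 ↔ a = 1) (Q v)⟩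
  refine ⟨fun v ↦ Q v + B x v, hQ.add_linearMap (B x), Set.ext fun v ↦ ?_⟩
  change Q (x + v) = c ↔ Q v + B x v = 0
  rw [hQ.map_add, show Q x = c from hx, add_assoc, add_eq_left]

theorem YieldsForm.exists_eqOn_of_le_orthogonal [FiniteDimensional (ZMod 2) V]
    (hQ : YieldsForm B Q) (hB : B.Nondegenerate) (hW : W ≤ B.orthogonal W) :
    ∃ a, ∀ w ∈ W, Q w = B a w := by
  let f : W →+ ZMod 2 :=
    { toFun := fun w ↦ Q w
      map_zero' := hQ.map_zero
      map_add' := fun v w ↦ by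
        rw [W.coe_add, hQ.map_add, hW w.2 v v.2, add_zero] }
  obtain ⟨g, hg⟩ := (f.toZModLinearMap 2).exists_extend
  obtain ⟨a, rfl⟩ := (LinearMap.BilinForm.toDual B hB).surjective g
  exact ⟨a, fun w hw ↦ (LinearMap.congr_fun hg ⟨w, hw⟩).symm⟩

theorem IsAffineQuadric.coset_subset_unique (hD : IsAffineQuadric B D) (hB : B.IsRefl)
    (hL : IsLagrangian B L) {x y : V} (hx : (x + ·) '' (L : Set V) ⊆ D)
    (hy : (y + ·) '' (L : Set V) ⊆ D) : (x + ·) '' (L : Set V) = (y + ·) '' (L : Set V) := by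
  have hxD : x ∈ D := hx (mem_image_add_left_iff.2 (by simp))
  obtain ⟨Q, hQ, hDQ⟩ := hD.exists_preimage_add_left_eq_quadric hxD
  have hQL : (L : Set V) ⊆ quadric Q := hDQ ▸ Set.image_subset_iff.1 hx
  have hQyx : ∀ l ∈ L, Q (y - x + l) = 0 := fun l hl ↦ by
    change y - x + l ∈ quadric Q
    rw [← hDQ, Set.mem_preimage, ← add_assoc, add_sub_cancel]
    exact hy ⟨l, hl, rfl⟩
  refine image_add_left_eq_of_sub_mem ?_
  rw [isLagrangian_iff_eq_orthogonal.1 hL]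
  refine fun l hl ↦ hB _ _ ?_
  have h₀ : Q (y - x) = 0 := by simpa using hQyx 0 L.zero_mem
  simpa [hQ.map_add, h₀, show Q l = 0 from hQL hl] using hQyx l hl

end QuadraticForm

section ExponentialSum

variable {V : Type*} [AddCommGroup V] [Module (ZMod 2) V] [Fintype V]
  {B : LinearMap.BilinForm (ZMod 2) V} {Q : V → ZMod 2} {W L : Submodule (ZMod 2) V} {D : Set V}
  {J : ℕ}

open Classical in
theorem sum_signChar_apply (B : LinearMap.BilinForm (ZMod 2) V) (W : Submodule (ZMod 2) V)
    (v : V) :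
    ∑ w : W, signChar (B w v) = if v ∈ B.orthogonal W then (Nat.card W : ℤ) else 0 := by
  let ψ : AddChar W ℤ := signChar.compAddMonoidHom ((B.flip v).comp W.subtype).toAddMonoidHom
  have hψ : ψ = 0 ↔ v ∈ B.orthogonal W := by
    rw [AddChar.eq_zero_iff, LinearMap.BilinForm.mem_orthogonal_iff, Subtype.forall]
    exact forall₂_congr fun w _ ↦ (by decide : ∀ a, signChar a = 1 ↔ a = 0) (B w v)
  rw [Nat.card_eq_fintype_card, ← if_congr hψ rfl rfl]
  exact ψ.sum_eq_ite

-- Average `(-1) ^ Q (w + v) = (-1) ^ Q v * (-1) ^ B w v` over `w ∈ W`.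
theorem YieldsForm.signSum_eq_signSum_orthogonal (hQ : YieldsForm B Q)
    (hW : (W : Set V) ⊆ quadric Q) [Fintype (B.orthogonal W)] :
    signSum Q = signSum fun v : B.orthogonal W ↦ Q v := by
  classical
  have htranslate (w : W) : ∑ v, signChar (Q (w + v)) = signSum Q :=
    Equiv.sum_comp (Equiv.addLeft (w : V)) fun v ↦ signChar (Q v)
  have hsplit (w : W) (v : V) : signChar (Q (w + v)) = signChar (Q v) * signChar (B w v) := by
    rw [hQ.map_add, show Q w = 0 from hW w.2, zero_add, AddChar.map_add_eq_mul]
  refine mul_left_cancel₀ (Nat.cast_ne_zero.2 (Nat.card_pos (α := W)).ne' : (Nat.card W : ℤ) ≠ 0) ?_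
  calc (Nat.card W : ℤ) * signSum Q
      = ∑ w : W, ∑ v, signChar (Q (w + v)) := by simp [htranslate]
    _ = ∑ v, signChar (Q v) * ∑ w : W, signChar (B w v) := by
        simp only [hsplit, Finset.mul_sum]
        exact Finset.sum_comm
    _ = ∑ v with v ∈ B.orthogonal W, Nat.card W * signChar (Q v) := by
        simp only [sum_signChar_apply, Finset.sum_filter, mul_comm, ite_mul, zero_mul]
    _ = Nat.card W * signSum fun v : B.orthogonal W ↦ Q v := by
        rw [signSum, Finset.mul_sum]
        exact Finset.sum_subtype _ (by simp) _

theorem YieldsForm.signSum_add_apply (hQ : YieldsForm B Q) (a : V) :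
    (signSum fun v ↦ Q v + B a v) = signChar (Q a) * signSum Q := by
  rw [signSum, signSum, ← Equiv.sum_comp (Equiv.addLeft a) fun v ↦ signChar (Q v),
    Finset.mul_sum]
  refine Finset.sum_congr rfl fun v _ ↦ ?_
  rw [Equiv.coe_addLeft, hQ.map_add, add_assoc, AddChar.map_add_eq_mul _ (Q a), ← mul_assoc,
    ← sq, (by decide : ∀ c, signChar c ^ 2 = 1), one_mul]

theorem YieldsForm.exists_coset_subset_quadric (hQ : YieldsForm B Q) (hB : B.Nondegenerate)
    (hsum : 0 < signSum Q) (hL : IsLagrangian B L) :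
    ∃ a, (a + ·) '' (L : Set V) ⊆ quadric Q := by
  classical
  have hperp := isLagrangian_iff_eq_orthogonal.1 hL
  obtain ⟨a, ha⟩ := hQ.exists_eqOn_of_le_orthogonal hB hperp.le
  have hzero : ∀ l ∈ L, Q l + B a l = 0 := fun l hl ↦ by
    rw [ha l hl, CharTwo.add_self_eq_zero]
  have hpos : 0 < signChar (Q a) * signSum Q := by
    rw [← hQ.signSum_add_apply, (hQ.add_linearMap (B a)).signSum_eq_signSum_orthogonal hzero]
    refine Finset.sum_pos (fun l _ ↦ ?_) Finset.univ_nonempty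
    simp [hzero l (hperp.ge l.2)]
  have hQa : Q a = 0 :=
    (by decide : ∀ c, 0 < signChar c → c = 0) _ (pos_of_mul_pos_left hpos hsum.le)
  refine ⟨a, ?_⟩
  rintro _ ⟨l, hl, rfl⟩
  change Q (a + l) = 0
  rw [hQ.map_add, hQa, zero_add, hzero l hl]

theorem IsAffineQuadric.existsUnique_coset_subset (hD : IsAffineQuadric B D)
    (hB : IsSymplectic B) {x : V} (hQ : YieldsForm B Q) (hDQ : (x + ·) ⁻¹' D = quadric Q)
    (hsum : 0 < signSum Q) (hL : IsLagrangian B L) :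
    ∃! C : Set V, (∃ v : V, C = (v + ·) '' (L : Set V)) ∧ C ⊆ D := by
  obtain ⟨a, ha⟩ := hQ.exists_coset_subset_quadric hB.nondegenerate hsum hL
  have hxa : (x + a + ·) '' (L : Set V) ⊆ D := by
    rw [← hDQ, ← Set.image_subset_iff, Set.image_image] at ha
    simpa only [add_assoc] using ha
  refine ⟨_, ⟨⟨x + a, rfl⟩, hxa⟩, ?_⟩
  rintro _ ⟨⟨v, rfl⟩, hv⟩
  exact hD.coset_subset_unique hB.isAlt.isRefl hL hv hxa

theorem signSum_eq_two_pow (hdim : Module.finrank (ZMod 2) V = 2 * J) (hJ : 0 < J)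
    (hcard : (quadric Q).ncard = 2 ^ (J - 1) * (2 ^ J + 1)) : signSum Q = 2 ^ J := by
  have h := two_mul_ncard_quadric Q
  obtain ⟨j, rfl⟩ := Nat.exists_eq_add_of_lt hJ
  rw [hcard, Module.natCard_eq_pow_finrank (K := ZMod 2), Nat.card_zmod, hdim] at h
  simp only [zero_add, Nat.add_sub_cancel] at h ⊢
  push_cast at h
  linear_combination -h

theorem IsAffineQuadric.exists_signSum_eq_two_pow (hD : IsAffineQuadric B D)
    (hdim : Module.finrank (ZMod 2) V = 2 * J) (hJ : 0 < J)
    (hcard : D.ncard = 2 ^ (J - 1) * (2 ^ J + 1)) {x : V} (hx : x ∈ D) :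
    ∃ Q, YieldsForm B Q ∧ (x + ·) ⁻¹' D = quadric Q ∧ signSum Q = 2 ^ J := by
  obtain ⟨Q, hQ, hDQ⟩ := hD.exists_preimage_add_left_eq_quadric hx
  refine ⟨Q, hQ, hDQ, signSum_eq_two_pow hdim hJ ?_⟩
  rw [← hDQ, Set.ncard_preimage_of_injective_subset_range (add_right_injective x)
    (by simp [(add_left_surjective x).range_eq]), hcard]

theorem YieldsForm.two_mul_ncard_orthogonal_inter_quadric (hQ : YieldsForm B Q)
    (hWQ : (W : Set V) ⊆ quadric Q) :
    2 * (((B.orthogonal W : Set V) ∩ quadric Q).ncard : ℤ) =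
      Nat.card (B.orthogonal W) + signSum Q := by
  classical
  rw [hQ.signSum_eq_signSum_orthogonal hWQ, ← two_mul_ncard_quadric,
    ← Set.ncard_image_of_injective _ Subtype.val_injective]
  exact congrArg (fun s : Set V ↦ 2 * (s.ncard : ℤ))
    (Subtype.image_preimage_coe (B.orthogonal W : Set V) (quadric Q)).symm

theorem ncard_orthogonal_inter_quadric_sdiff (hB : B.Nondegenerate)
    (hdim : Module.finrank (ZMod 2) V = 2 * J) (hQ : YieldsForm B Q) (hsum : signSum Q = 2 ^ J)
    (hW : W ≤ B.orthogonal W) (hWQ : (W : Set V) ⊆ quadric Q) {m : ℕ}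
    (hWm : Module.finrank (ZMod 2) W + (m + 1) = J) :
    (((B.orthogonal W : Set V) ∩ quadric Q) \ W).ncard =
      (2 ^ J - 2 ^ Module.finrank (ZMod 2) W) * (2 ^ m + 1) := by
  have hperp : Module.finrank (ZMod 2) (B.orthogonal W) = J + (m + 1) := by
    rw [LinearMap.BilinForm.finrank_orthogonal hB, hdim]
    lia
  have hzeros : ((B.orthogonal W : Set V) ∩ quadric Q).ncard =
      2 ^ J * 2 ^ m + 2 ^ Module.finrank (ZMod 2) W * 2 ^ m := by
    have h := hQ.two_mul_ncard_orthogonal_inter_quadric hWQ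
    rw [Module.natCard_eq_pow_finrank (K := ZMod 2), Nat.card_zmod, hperp, hsum] at h
    zify
    refine mul_left_cancel₀ two_ne_zero (h.trans ?_)
    rw [← hWm]
    push_cast
    ring
  have : 2 ^ J = 2 * (2 ^ Module.finrank (ZMod 2) W * 2 ^ m) := by
    rw [← hWm]
    ring
  rw [Set.ncard_sdiff (Set.subset_inter hW hWQ), hzeros, ncard_submodule, Nat.card_zmod,
    Nat.sub_mul, mul_add_one, mul_add_one]
  lia

theorem ncard_lagrangiansBetween_span_singleton_quadric (hB : IsSymplectic B)
    (hdim : Module.finrank (ZMod 2) V = 2 * J) (hQ : YieldsForm B Q) (hsum : signSum Q = 2 ^ J)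
    {u : V} (hu : u ≠ 0) (hQu : Q u = 0) :
    (lagrangiansBetween B (Submodule.span (ZMod 2) {u}) (quadric Q)).ncard =
      ∏ j ∈ Finset.range (J - 1), (2 ^ j + 1) := by
  have hclosed := hQ.isOrthogonallyClosed_quadric
  have hpos := Module.finrank_pos_iff_exists_ne_zero (R := ZMod 2) (M := V) |>.2 ⟨u, hu⟩
  have hspan := bot_sup_eq (Submodule.span (ZMod 2) {u})
  rw [← hspan]
  refine ncard_lagrangiansBetween_eq_prod hB hdim hclosed (fun i ↦ 2 ^ i + 1) ?_ (J - 1)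
    (sup_span_singleton_le_orthogonal hB.isAlt bot_le (by simp))
    (hclosed.sup_span_singleton_subset (by simp [quadric, hQ.map_zero]) (by simp) hQu) ?_
  · intro W m hW hWQ hWm
    rw [Nat.card_zmod]
    exact ncard_orthogonal_inter_quadric_sdiff hB.nondegenerate hdim hQ hsum hW hWQ hWm
  · rw [hspan, finrank_span_singleton hu]
    lia

end ExponentialSum

/-- For an affine quadric `D` of size `2^{J−1}(2^J+1)`, every
Lagrangian subspace has exactly one coset contained in `D`; the affine
Lagrangian subspaces contained in `D` are as numerous as the Lagrangian
subspaces, namely `∏_{j=1}^{J}(2^j+1)`, each has cardinality `2^J`, and every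
pair of distinct points of `D` lies in exactly `∏_{j=0}^{J−2}(2^j+1)` of them,
forming a BIBD with parameters `(2^{J−1}(2^J+1), 2^J, ∏_{j=0}^{J−2}(2^j+1))`. -/
theorem lagrangians_in_affine_quadric
    {J : ℕ} (hJ : 2 ≤ J)
    {V : Type*} [AddCommGroup V] [Module (ZMod 2) V] [Fintype V] [DecidableEq V]
    (hdim : Module.finrank (ZMod 2) V = 2 * J)
    (B : V →ₗ[ZMod 2] V →ₗ[ZMod 2] ZMod 2) (hB : IsSymplectic B)
    (D : Set V) (hD : IsAffineQuadric B D)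
    (hDcard : D.ncard = 2 ^ (J - 1) * (2 ^ J + 1)) :
    (∀ L : Submodule (ZMod 2) V, IsLagrangian B L →
      ∃! C : Set V, (∃ v : V, C = (fun x => v + x) '' (L : Set V)) ∧ C ⊆ D) ∧
    {L : Submodule (ZMod 2) V | IsLagrangian B L}.ncard =
      ∏ j ∈ Finset.Icc 1 J, (2 ^ j + 1) ∧
    {A ∈ affineLagrangians B | A ⊆ D}.ncard =
      ∏ j ∈ Finset.Icc 1 J, (2 ^ j + 1) ∧
    (∀ A ∈ affineLagrangians B, A.ncard = 2 ^ J) ∧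
    (∀ x ∈ D, ∀ y ∈ D, x ≠ y →
      {A ∈ affineLagrangians B | A ⊆ D ∧ x ∈ A ∧ y ∈ A}.ncard =
        ∏ j ∈ Finset.range (J - 1), (2 ^ j + 1)) := by
  have htranslate := fun x (hx : x ∈ D) ↦ hD.exists_signSum_eq_two_pow hdim (by lia) hDcard hx
  have hunique : ∀ L : Submodule (ZMod 2) V, IsLagrangian B L →
      ∃! C : Set V, (∃ v : V, C = (fun x ↦ v + x) '' (L : Set V)) ∧ C ⊆ D := by
    obtain ⟨x, hx⟩ : D.Nonempty := Set.nonempty_of_ncard_ne_zero (by rw [hDcard]; positivity)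
    obtain ⟨Q, hQ, hDQ, hsum⟩ := htranslate x hx
    exact fun L hL ↦ hD.existsUnique_coset_subset hB hQ hDQ (by rw [hsum]; positivity) hL
  have hlagrangians := ncard_setOf_isLagrangian hB hdim
  rw [Nat.card_zmod] at hlagrangians
  refine ⟨hunique, hlagrangians, (ncard_affineLagrangians_subset hunique).trans hlagrangians,
    fun A hA ↦ ?_, fun x hx y hy hxy ↦ ?_⟩
  · rw [ncard_of_mem_affineLagrangians hB.nondegenerate hdim hA, Nat.card_zmod]
  · obtain ⟨Q, hQ, hDQ, hsum⟩ := htranslate x hx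
    have hQyx : y - x ∈ quadric Q := by simpa [← hDQ] using hy
    rw [ncard_affineLagrangians_through_pair, hDQ,
      ncard_lagrangiansBetween_span_singleton_quadric hB hdim hQ hsum (sub_ne_zero.2 hxy.symm) hQyx]
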